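/- Assume s | p^e + 1 with s > 1, r = 2en, p ∤ (m/t) and d | h. Set u = s/(d·l), t_0 = (q^t−1)/(q−1), k_l = k_l(t), k_{s/d} = k_{s/d}(t), and k_u = k_u(1). For a ≠ 0 set a_0 = −(m/t)·a^{−1} ∈ F_q^*, let ind_{γ_t} a_0 be the unique exponent with γ_t^{ind_{γ_t} a_0} = a_0, put Δ = k_{s/d} − i_0 − ind_{γ_t} a_0, and when l | Δ let j_0 ∈ {0,…,u−1} be the unique solution of (t_0/l)·j ≡ Δ/l (mod u). Then: (a) if a = 0, l > 1 and i_0 ≢ k_l (mod l), then N_t = (d/s)·( q^{t−1} − 1 + (−1)^{nt}·(q−1)·√(q^{t−2}) ); (b) if a = 0 and (l = 1, or l > 1 and i_0 ≡ k_l (mod l)), then N_t = (d/s)·( q^{t−1} − 1 − (−1)^{nt}·(q−1)·(l−1)·√(q^{t−2}) ); (c) if a ≠ 0 and l ∤ Δ, then N_t = (d/s)·( q^{t−1} − (−1)^{nt}·√(q^{t−2}) ); (d) if a ≠ 0, l | Δ, u > 1 and j_0 ≢ k_u (mod u), then N_t = (d/s)·( q^{t−1} − (−1)^{nt}·( ((−1)^n·√q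 − 1)·l + 1 )·√(q^{t−2}) ); (e) if a ≠ 0, l | Δ and (u = 1, or j_0 ≡ k_u (mod u)), then N_t = (d/s)·( q^{t−1} − (−1)^{nt}·( ((−1)^{n−1}·(u−1)·√q − 1)·l + 1 )·√(q^{t−2}) ). -/

import Mathlib

noncomputable section

open Complex Polynomial Classical

/-- `N_t(a,s,h)`: the number of elements `x` of the subfield `F_{q^t}` of `K = F_{q^m}`
with `Tr_{K/F}(x) = a` and `N_{K/F}(x) ∈ g^h·⟨g^s⟩`. -/
def NN (F K : Type*) [Field F] [Fintype F] [Field K] [Fintype K] [Algebra F K]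
    (g : F) (s h t : ℕ) (a : F) : ℕ :=
  Nat.card {x : K // x ^ (Fintype.card F) ^ t = x ∧ Algebra.trace F K x = a ∧
    ∃ k : ℕ, Algebra.norm F x = g ^ (h + s * k)}

/-- `k_N(τ)` in the semiprimitive case: `N/2` if `p > 2`, `n·τ` odd and `(p^e+1)/N` odd,
and `0` otherwise. -/
def kSemi (p e n N τ : ℕ) : ℕ :=
  if 2 < p ∧ Odd (n * τ) ∧ Odd ((p ^ e + 1) / N) then N / 2 else 0

/-
Let `L` be a field with `P ^ (2 * k)` elements, `P = p ^ e`, and `Ψ` its canonical additive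
character. As `x ↦ x ^ P` preserves `Ψ`, expanding `(x + y) ^ (P + 1)` shows that the Weil sum
`∑ x, Ψ (c * x ^ (P + 1))` has square `P ^ (2 * k)` unless `c` lies in one exceptional class modulo
`(P + 1)`-th powers, where `c * x + c ^ P * x ^ (P * P)` has a nonzero root `x`. The sum is also
`1 + (P + 1) * η` with `η` an algebraic integer, so it equals `(-P) ^ k`. The exceptional class, and
then the exponents `N ∣ P + 1`, follow because averaging the sums of exponent `N * M` over `M`
classes gives a sum of exponent `N`, and the sum of exponent `1` vanishes.

By orthogonality of the characters of `F = F_q`, `N_t` is a sum over `c ∈ F` of Weil sums over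
`E = F_{q^t}`. Since `Fˣ` is generated by `γ ^ ((q ^ t - 1) / (q - 1))` inside `Eˣ`, the elements of
`Fˣ` in the exceptional class of `Eˣ` form either nothing or a cyclotomic class of `Fˣ`; it is
counted when `a = 0`, and contributes a Weil sum over `F` when `a ≠ 0`.
-/

section CyclotomicClass

variable {G : Type*} [CommGroup G]

/-- The cyclotomic class `γ^i · ⟨γ^N⟩` of a cyclic group generated by `γ`, encoded as the coset
`γ^i · G^N` of the `N`-th powers. -/
def cyclotomicClass (γ : G) (N : ℕ) (i : ℤ) : Set G :=
  Set.range fun v => γ ^ i * v ^ N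

lemma mul_zpow_mem_cyclotomicClass_iff (γ v : G) (N : ℕ) (i w : ℤ) :
    v * γ ^ w ∈ cyclotomicClass γ N i ↔ v ∈ cyclotomicClass γ N (i - w) := by
  simp only [cyclotomicClass, Set.mem_range, zpow_sub, mul_right_comm _ (γ ^ w)⁻¹,
    mul_inv_eq_iff_eq_mul]

variable {γ : G} (hγ : ∀ v : G, v ∈ Subgroup.zpowers γ) {N : ℕ}
include hγ

lemma zpow_mem_cyclotomicClass_iff (hN : N ∣ Nat.card G) {i w : ℤ} :
    γ ^ w ∈ cyclotomicClass γ N i ↔ (N : ℤ) ∣ w - i := by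
  have hN' : (N : ℤ) ∣ orderOf γ := by
    rwa [orderOf_eq_card_of_forall_mem_zpowers hγ, Int.natCast_dvd_natCast]
  constructor
  · rintro ⟨v, hv⟩
    obtain ⟨j, rfl⟩ := hγ v
    have hord : (orderOf γ : ℤ) ∣ w - (i + j * N) := by
      rw [← Int.modEq_iff_dvd, ← zpow_eq_zpow_iff_modEq, ← hv, zpow_add, zpow_mul, zpow_natCast]
    have hsplit : w - i = w - (i + j * N) + j * N := by ring
    exact hsplit ▸ dvd_add (hN'.trans hord) (dvd_mul_left _ _)
  · rintro ⟨j, hj⟩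
    exact ⟨γ ^ j, by
      simp only
      rw [← zpow_natCast, ← zpow_mul, ← zpow_add, mul_comm j, ← hj, add_sub_cancel]⟩

variable [Fintype G]

lemma card_filter_zpow_mul_pow_eq (hN : N ∣ Nat.card G) (i : ℤ) (w : G) :
    (Finset.univ.filter fun v => γ ^ i * v ^ N = w).card =
      if w ∈ cyclotomicClass γ N i then N else 0 := by
  have : IsCyclic G := ⟨γ, hγ⟩
  split_ifs with hw
  · obtain ⟨z, rfl⟩ := hw
    have hfiber := MonoidHom.card_fiber_eq_of_mem_range (powMonoidHom N : G →* G)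
      (x := z ^ N) (y := 1) ⟨z, rfl⟩ ⟨1, one_pow N⟩
    have hker := IsCyclic.card_powMonoidHom_ker (G := G) N
    rw [Nat.gcd_eq_right hN, Nat.card_eq_fintype_card, Fintype.card_subtype] at hker
    simp only [MonoidHom.mem_ker] at hker
    simpa only [mul_right_inj, powMonoidHom_apply] using hfiber.trans hker
  · rw [Finset.card_eq_zero, Finset.filter_eq_empty_iff]
    exact fun v _ hv => hw ⟨v, hv⟩

lemma sum_zpow_mul_pow {M : Type*} [AddCommMonoid M] (hN : N ∣ Nat.card G) (i : ℤ) (f : G → M) :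
    ∑ v, f (γ ^ i * v ^ N) = N • ∑ v with v ∈ cyclotomicClass γ N i, f v := by
  rw [Finset.sum_comp f fun v => γ ^ i * v ^ N, Finset.sum_subset (Finset.subset_univ _)]
  · simp only [card_filter_zpow_mul_pow_eq hγ hN, ite_smul, zero_smul, Finset.sum_filter,
      Finset.smul_sum, smul_ite, smul_zero]
  · intro w _ hw
    rw [card_filter_zpow_mul_pow_eq hγ hN, if_neg, zero_smul]
    rintro ⟨v, hv⟩
    exact hw (Finset.mem_image.2 ⟨v, Finset.mem_univ v, hv⟩)

end CyclotomicClass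

lemma sum_range_ite_dvd {A : Type*} [AddCommMonoid A] {N M : ℕ} (hN : 0 < N) (hM : 0 < M)
    (z : ℤ) (x : A) :
    (∑ b ∈ Finset.range M, if ((N * M : ℕ) : ℤ) ∣ z + N * b then x else 0) =
      if (N : ℤ) ∣ z then x else 0 := by
  split_ifs with hz
  · obtain ⟨y, rfl⟩ := hz
    obtain ⟨b, hbM, hb⟩ := Int.existsUnique_equiv_nat (-y) (b := (M : ℤ)) (by positivity)
    replace hbM : b < M := by exact_mod_cast hbM
    have hdvd (c : ℕ) : ((N * M : ℕ) : ℤ) ∣ N * y + N * c ↔ c ≡ b [MOD M] := by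
      rw [← mul_add, Nat.cast_mul, mul_dvd_mul_iff_left (by positivity), ← neg_neg y,
        neg_add_eq_sub, ← Int.modEq_iff_dvd, ← Int.natCast_modEq_iff]
      exact ⟨fun h => h.symm.trans hb.symm, fun h => (h.trans hb).symm⟩
    rw [Finset.sum_eq_single_of_mem b (Finset.mem_range.2 hbM), if_pos ((hdvd b).2 rfl)]
    exact fun c hc hcb =>
      if_neg fun h => hcb (((hdvd c).1 h).eq_of_lt_of_lt (Finset.mem_range.1 hc) hbM)
  · refine Finset.sum_eq_zero fun b _ => if_neg fun h => hz ?_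
    have hNb : (N : ℤ) ∣ z + N * b := (Int.natCast_dvd_natCast.2 (dvd_mul_right N M)).trans h
    exact (dvd_add_left (dvd_mul_right _ _)).1 hNb

lemma sum_range_sum_zpow_mul_pow {G A : Type*} [CommGroup G] [Fintype G] [AddCommMonoid A] {γ : G}
    (hγ : ∀ v : G, v ∈ Subgroup.zpowers γ) {M : ℕ} (hM : M ∣ Nat.card G) (f : G → A) :
    ∑ b ∈ Finset.range M, ∑ v, f (γ ^ b * v ^ M) = M • ∑ v, f v := by
  have hunique (v : G) :
      (∑ b ∈ Finset.range M, if v ∈ cyclotomicClass γ M (b : ℤ) then f v else 0) = f v := by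
    obtain ⟨w, rfl⟩ := hγ v
    have h := sum_range_ite_dvd one_pos (Nat.pos_of_dvd_of_pos hM Nat.card_pos) (-w) (f (γ ^ w))
    simp only [one_mul, Nat.cast_one, one_dvd, if_true, neg_add_eq_sub] at h
    simpa only [zpow_mem_cyclotomicClass_iff hγ hM, dvd_sub_comm] using h
  simp only [← zpow_natCast γ, sum_zpow_mul_pow hγ hM, ← Finset.smul_sum, Finset.sum_filter]
  rw [Finset.sum_comm, Finset.sum_congr rfl fun v _ => hunique v]

lemma geomSum_modEq {q S : ℕ} (hq : q ≡ 1 [MOD S]) (t : ℕ) :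
    ∑ i ∈ Finset.range t, q ^ i ≡ t [MOD S] := by
  have hpow : ∀ i ∈ Finset.range t, q ^ i ≡ 1 [MOD S] := fun i _ => by simpa using hq.pow i
  simpa only [Finset.sum_const, Finset.card_range, smul_eq_mul, mul_one] using Nat.ModEq.sum hpow

lemma exists_mul_modEq_iff_gcd_dvd (A S : ℕ) (D : ℤ) :
    (∃ j : ℤ, A * j ≡ D [ZMOD S]) ↔ (A.gcd S : ℤ) ∣ D := by
  constructor
  · rintro ⟨j, hj⟩
    have hA : (A.gcd S : ℤ) ∣ A := Int.natCast_dvd_natCast.2 (Nat.gcd_dvd_left A S)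
    have hS : (A.gcd S : ℤ) ∣ S := Int.natCast_dvd_natCast.2 (Nat.gcd_dvd_right A S)
    exact (dvd_sub_left (hA.mul_right j)).1 (hS.trans hj.dvd)
  · rintro ⟨y, rfl⟩
    refine ⟨A.gcdA S * y, Int.modEq_of_dvd ⟨A.gcdB S * y, ?_⟩⟩
    linear_combination y * Nat.gcd_eq_gcd_ab A S

lemma dvd_mul_sub_iff_of_modEq {A S : ℕ} {D j : ℤ} (hS : 0 < S) (hj : A * j ≡ D [ZMOD S])
    (z : ℤ) : (S : ℤ) ∣ A * z - D ↔ ((S / A.gcd S : ℕ) : ℤ) ∣ z - j := by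
  rw [← Int.modEq_iff_dvd, ← Int.modEq_iff_dvd]
  refine ⟨fun h => ?_, fun h => hj.symm.trans (Int.modEq_of_dvd ?_)⟩
  · have hcancel := Int.ModEq.cancel_left_div_gcd (by positivity) (hj.trans h)
    rwa [Int.gcd_natCast_natCast, Nat.gcd_comm, ← Int.natCast_div] at hcancel
  · have hS' : (S : ℤ) ∣ A * (S / A.gcd S : ℕ) := by
      rw [← Nat.cast_mul, Int.natCast_dvd_natCast, ← Nat.mul_div_assoc _ (Nat.gcd_dvd_right A S),
        Nat.mul_div_right_comm (Nat.gcd_dvd_left A S)]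
      exact dvd_mul_left _ _
    exact mul_sub (A : ℤ) z j ▸ hS'.trans (mul_dvd_mul_left _ h.dvd)

lemma kSemi_modEq_of_dvd {p e n S N τ : ℕ} (hp : p.Prime) (hS : S ∣ p ^ e + 1) (hN : N ∣ S) :
    kSemi p e n S τ ≡ kSemi p e n N τ [MOD N] := by
  by_cases h : 2 < p ∧ Odd (n * τ)
  · obtain ⟨b, hb⟩ := hS
    obtain ⟨c, rfl⟩ := hN
    have heven : Even (N * (c * b)) := by
      rw [← mul_assoc, ← hb]
      exact ((hp.odd_of_ne_two h.1.ne').pow).add_one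
    have hNc : 0 < N * c := Nat.pos_of_mul_pos_right (hb ▸ (p ^ e).add_one_pos)
    have hN : 0 < N := Nat.pos_of_mul_pos_right hNc
    have hdivS : (p ^ e + 1) / (N * c) = b := by rw [hb, Nat.mul_div_cancel_left b hNc]
    have hdivN : (p ^ e + 1) / N = c * b := by
      rw [hb, mul_assoc, Nat.mul_div_cancel_left (c * b) hN]
    simp only [kSemi, h, true_and, hdivS, hdivN, Nat.odd_mul]
    rcases Nat.even_or_odd b with hbe | hbo
    · simp only [Nat.not_odd_iff_even.2 hbe, and_false, if_false]; rfl
    rcases Nat.even_or_odd' c with ⟨y, rfl | rfl⟩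
    · have hhalf : N * (2 * y) / 2 = N * y := by
        rw [mul_left_comm, Nat.mul_div_cancel_left _ two_pos]
      simp only [hbo, hhalf, Nat.not_odd_iff_even.2 (even_two_mul y), false_and, if_true, if_false]
      exact Nat.modEq_zero_iff_dvd.2 (dvd_mul_right N y)
    · obtain ⟨M, rfl⟩ : 2 ∣ N := by
        have hodd := (odd_two_mul_add_one y).mul hbo
        exact ((Nat.even_mul.1 heven).resolve_right (Nat.not_even_iff_odd.2 hodd)).two_dvd
      have hhalf : 2 * M * (2 * y + 1) / 2 = 2 * M * y + M := by
        rw [mul_assoc, Nat.mul_div_cancel_left _ two_pos]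
        ring
      simp only [hbo, hhalf, odd_two_mul_add_one, and_self, if_true,
        Nat.mul_div_cancel_left M two_pos]
      exact Nat.modEq_iff_dvd.2 ⟨-y, by push_cast; ring⟩
  · have h' (R : ℕ) : ¬(2 < p ∧ Odd (n * τ) ∧ Odd ((p ^ e + 1) / R)) := by tauto
    rw [kSemi, kSemi, if_neg (h' S), if_neg (h' N)]

lemma kSemi_mul_right (p e n N τ : ℕ) : kSemi p e n N τ = kSemi p e (n * τ) N 1 := by
  simp only [kSemi, mul_one]

lemma kSemi_add_one_modEq {p e k : ℕ} (hp : p.Prime) (hp2 : p ≠ 2) :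
    kSemi p e k (p ^ e + 1) 1 ≡ (p ^ e + 1) / 2 * ∑ j ∈ Finset.range k, ((p ^ e) ^ 2) ^ j
      [MOD p ^ e + 1] := by
  have hodd : Odd (p ^ e) := (hp.odd_of_ne_two hp2).pow
  have hparity : (if Odd k then 1 else 0) ≡ ∑ j ∈ Finset.range k, ((p ^ e) ^ 2) ^ j [MOD 2] := by
    have hsum := geomSum_modEq (S := 2) (Nat.odd_iff.1 (hodd.pow (n := 2))) k
    refine Nat.ModEq.trans ?_ hsum.symm
    split_ifs with hk
    · exact (Nat.odd_iff.1 hk).symm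
    · exact (Nat.even_iff.1 (Nat.not_odd_iff_even.1 hk)).symm
  have hκ : kSemi p e k (p ^ e + 1) 1 = (p ^ e + 1) / 2 * if Odd k then 1 else 0 := by
    have hp3 : 2 < p := lt_of_le_of_ne hp.two_le hp2.symm
    simp [kSemi, hp3]
  have hmul := hparity.mul_left' ((p ^ e + 1) / 2)
  rwa [Nat.div_mul_cancel hodd.add_one.two_dvd, ← hκ] at hmul

lemma int_dvd_of_eq_mul_isIntegral {A B : ℤ} {η : ℂ} (hη : IsIntegral ℤ η)
    (h : (A : ℂ) = B * η) : B ∣ A := by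
  rcases eq_or_ne B 0 with rfl | hB
  · simpa using h
  have hB' : (B : ℂ) ≠ 0 := by exact_mod_cast hB
  have hrat : ∃ r : ℚ, η = r := ⟨A / B, by push_cast; rw [h, mul_div_cancel_left₀ _ hB']⟩
  obtain ⟨y, rfl⟩ := hη.exists_int_iff_exists_rat.1 hrat
  exact ⟨y, by exact_mod_cast h⟩

lemma eq_neg_pow_of_sq_eq_of_integral {P k : ℕ} (hP : 2 ≤ P) {T η : ℂ} (hη : IsIntegral ℤ η)
    (hT : T = 1 + (P + 1) * η) (hsq : T * T = (P : ℂ) ^ (2 * k)) : T = (-P : ℂ) ^ k := by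
  have hfactor : (T - (-P : ℂ) ^ k) * (T + (-P : ℂ) ^ k) = 0 := by
    rw [pow_mul, ← neg_sq, ← pow_mul] at hsq
    linear_combination hsq
  refine (mul_eq_zero.1 hfactor).elim sub_eq_zero.1 fun hneg =>
    absurd ?_ (by omega : ¬(P : ℤ) + 1 ≤ 2)
  have hone : (P : ℤ) + 1 ∣ 1 - (-P : ℤ) ^ k := by
    simpa [add_comm] using sub_dvd_pow_sub_pow (1 : ℤ) (-P) k
  have hint : (P : ℤ) + 1 ∣ -(-P : ℤ) ^ k - 1 := int_dvd_of_eq_mul_isIntegral hη (by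
    push_cast
    linear_combination hT - hneg)
  have htwo : (P : ℤ) + 1 ∣ 2 := by
    have hsub := dvd_sub hone hint
    ring_nf at hsub
    ring_nf
    exact hsub
  exact Int.le_of_dvd two_pos htwo

lemma sum_eq_zero_add_sum_units {L A : Type*} [Field L] [Fintype L] [AddCommMonoid A]
    (f : L → A) : ∑ x, f x = f 0 + ∑ v : Lˣ, f v := by
  rw [Fintype.sum_eq_add_sum_subtype_ne f 0]
  exact congrArg _ (Fintype.sum_equiv unitsEquivNeZero.symm _ _ fun _ => rfl)

/-- The Weil sum `∑ x, Ψ (c * x ^ N)` of the monomial `c * x ^ N`. -/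
def weilSum {L R : Type*} [CommRing L] [Fintype L] [CommRing R] (Ψ : AddChar L R) (N : ℕ) (c : L) :
    R :=
  ∑ x, Ψ (c * x ^ N)

lemma addChar_pow_char_pow {L R : Type*} [Semiring L] [Monoid R] {p : ℕ} {Ψ : AddChar L R}
    (hΨ : ∀ z, Ψ (z ^ p) = Ψ z) (e : ℕ) (z : L) : Ψ (z ^ p ^ e) = Ψ z := by
  induction e with
  | zero => rw [pow_zero, pow_one]
  | succ k ih => rw [pow_succ, pow_mul, hΨ, ih]

lemma addChar_mul_add_pow_mul_addChar_neg {L R : Type*} [CommRing L] [CommMonoid R] {p : ℕ}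
    [ExpChar L p] {Ψ : AddChar L R} (hfrob : ∀ z, Ψ (z ^ p) = Ψ z) (e : ℕ) (c x y : L) :
    Ψ (c * (x + y) ^ (p ^ e + 1)) * Ψ (-c * y ^ (p ^ e + 1)) =
      Ψ (c * x ^ (p ^ e + 1)) * Ψ (y ^ p ^ e * (c * x + c ^ p ^ e * x ^ (p ^ e * p ^ e))) := by
  have htwist : Ψ (c * x ^ p ^ e * y) = Ψ (y ^ p ^ e * (c ^ p ^ e * x ^ (p ^ e * p ^ e))) := by
    rw [← addChar_pow_char_pow hfrob e, mul_pow, mul_pow, ← pow_mul, mul_comm]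
  have hexpand : c * (x + y) ^ (p ^ e + 1) + -c * y ^ (p ^ e + 1) =
      c * x ^ (p ^ e + 1) + (y ^ p ^ e * (c * x) + c * x ^ p ^ e * y) := by
    rw [pow_succ (x + y), add_pow_expChar_pow]
    ring
  rw [← AddChar.map_add_eq_mul, hexpand, mul_add, AddChar.map_add_eq_mul, AddChar.map_add_eq_mul,
    htwist, ← AddChar.map_add_eq_mul (ψ := Ψ) (y ^ p ^ e * _)]

section WeilSum

variable {L R : Type*} [Field L] [Fintype L] [CommRing R]

lemma weilSum_eq_one_add_sum_units (Ψ : AddChar L R) {N : ℕ} (hN : N ≠ 0) (c : L) :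
    weilSum Ψ N c = 1 + ∑ v : Lˣ, Ψ (c * (v : L) ^ N) := by
  rw [weilSum, sum_eq_zero_add_sum_units, zero_pow hN, mul_zero, AddChar.map_zero_eq_one]

lemma weilSum_mul_pow (Ψ : AddChar L R) (N : ℕ) (c : L) (y : Lˣ) :
    weilSum Ψ N (c * (y : L) ^ N) = weilSum Ψ N c :=
  Fintype.sum_equiv y.mulLeft _ _ fun x => by rw [Units.mulLeft_apply, mul_pow, mul_assoc]

lemma weilSum_one_eq_zero [IsDomain R] {Ψ : AddChar L R} (hΨ : Ψ.IsPrimitive) {c : L} (hc : c ≠ 0) :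
    weilSum Ψ 1 c = 0 := by
  simpa [weilSum, hc, mul_comm] using AddChar.sum_mulShift c hΨ

variable {p e : ℕ} [Fact p.Prime] [CharP L p]

lemma weilSum_mul_weilSum_neg [IsDomain R] {Ψ : AddChar L R} (hΨ : Ψ.IsPrimitive)
    (hfrob : ∀ z, Ψ (z ^ p) = Ψ z) {c : L}
    (hc : ∀ x : L, c * x + c ^ p ^ e * x ^ (p ^ e * p ^ e) = 0 → x = 0) :
    weilSum Ψ (p ^ e + 1) c * weilSum Ψ (p ^ e + 1) (-c) = Fintype.card L := by
  have hp : p ^ e ≠ 0 := pow_ne_zero e (Fact.out : p.Prime).ne_zero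
  have hfrobSum (b : L) : ∑ y, Ψ (y ^ p ^ e * b) =
      ((if b = 0 then Fintype.card L else 0 : ℕ) : R) := by
    rw [← AddChar.sum_mulShift b hΨ]
    exact Fintype.sum_bijective _ (bijective_iterateFrobenius L p e) _ _ fun y => by
      rw [iterateFrobenius_def]
  have hinner (x : L) : ∑ y, Ψ (c * (x + y) ^ (p ^ e + 1)) * Ψ (-c * y ^ (p ^ e + 1)) =
      ((if x = 0 then Fintype.card L else 0 : ℕ) : R) := by
    simp only [addChar_mul_add_pow_mul_addChar_neg hfrob, ← Finset.mul_sum, hfrobSum]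
    rcases eq_or_ne x 0 with rfl | hx
    · simp [zero_pow (mul_ne_zero hp hp)]
    · rw [if_neg (mt (hc x) hx), if_neg hx, Nat.cast_zero, mul_zero]
  calc weilSum Ψ (p ^ e + 1) c * weilSum Ψ (p ^ e + 1) (-c)
      = ∑ y, ∑ x, Ψ (c * x ^ (p ^ e + 1)) * Ψ (-c * y ^ (p ^ e + 1)) := by
        rw [weilSum, weilSum, Finset.sum_mul_sum, Finset.sum_comm]
    _ = ∑ y, ∑ x, Ψ (c * (x + y) ^ (p ^ e + 1)) * Ψ (-c * y ^ (p ^ e + 1)) :=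
        Finset.sum_congr rfl fun y _ => (Equiv.sum_comp (Equiv.addRight y) _).symm
    _ = Fintype.card L := by
        rw [Finset.sum_comm, Finset.sum_congr rfl fun x _ => hinner x, ← Nat.cast_sum,
          Finset.sum_ite_eq', if_pos (Finset.mem_univ 0)]

end WeilSum

section Semiprimitive

variable {L : Type*} [Field L] [Fintype L] {P k : ℕ}

lemma one_lt_of_card_eq_pow {j : ℕ} (hL : Fintype.card L = P ^ j) : 1 < P := by
  by_contra! hP
  exact (Fintype.one_lt_card (α := L)).not_ge (hL ▸ pow_le_one₀ P.zero_le hP)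

lemma card_units_of_card_eq_pow (hL : Fintype.card L = P ^ (2 * k)) :
    Nat.card Lˣ = (P + 1) * ((P - 1) * ∑ j ∈ Finset.range k, (P ^ 2) ^ j) := by
  have hP := one_lt_of_card_eq_pow hL
  rw [Nat.card_eq_fintype_card, Fintype.card_units, hL, pow_mul, ← mul_assoc, ← Nat.sq_sub_sq,
    one_pow, mul_comm, Nat.geomSum_eq (Nat.one_lt_pow two_ne_zero hP)]
  exact (Nat.div_mul_cancel (by simpa using Nat.sub_dvd_pow_sub_pow (P ^ 2) 1 k)).symm

lemma add_one_dvd_card_units (hL : Fintype.card L = P ^ (2 * k)) : P + 1 ∣ Nat.card Lˣ :=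
  card_units_of_card_eq_pow hL ▸ dvd_mul_right _ _

variable {γ : Lˣ} (hγ : ∀ v : Lˣ, v ∈ Subgroup.zpowers γ)
include hγ

lemma zpow_pred_mul_eq_one_iff (hL : Fintype.card L = P ^ (2 * k)) (z : ℤ) :
    γ ^ (((P : ℤ) - 1) * z) = 1 ↔ ((P : ℤ) + 1) * ∑ j ∈ Finset.range k, ((P : ℤ) ^ 2) ^ j ∣ z := by
  have hP := one_lt_of_card_eq_pow hL
  have hP' : (P : ℤ) - 1 ≠ 0 := by omega
  rw [← orderOf_dvd_iff_zpow_eq_one, orderOf_eq_card_of_forall_mem_zpowers hγ,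
    card_units_of_card_eq_pow hL, mul_left_comm, Nat.cast_mul, Nat.cast_pred (by omega),
    mul_dvd_mul_iff_left hP']
  push_cast
  rfl

lemma exists_pow_eq_neg_one {p e : ℕ} [ExpChar L p] (hL : Fintype.card L = (p ^ e) ^ (2 * k)) :
    ∃ y : Lˣ, y ^ (p ^ e + 1) = -1 := by
  obtain ⟨z, hz : γ ^ z = -1⟩ := hγ (-1)
  have hpred : γ ^ (((p ^ e : ℕ) - 1 : ℤ) * z) = 1 := by
    have hchar : (-1 : Lˣ) ^ p ^ e = -1 := Units.ext (by simpa using neg_one_pow_expChar_pow L p e)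
    rw [mul_comm, zpow_mul, hz, zpow_sub_one, zpow_natCast, hchar, mul_inv_cancel]
  obtain ⟨y, hy⟩ := (dvd_mul_right _ _).trans ((zpow_pred_mul_eq_one_iff hγ hL z).1 hpred)
  exact ⟨γ ^ y, by rw [← hz, hy, mul_comm, zpow_mul, ← zpow_natCast]; norm_cast⟩

omit [Fintype L] in
lemma pow_half_card_eq_neg_one [Finite L] {H : ℕ} (hH : Nat.card Lˣ = H * 2) : γ ^ H = -1 := by
  have hroot : IsPrimitiveRoot (γ ^ H) 2 := (IsPrimitiveRoot.orderOf γ).pow (orderOf_pos γ)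
    ((orderOf_eq_card_of_forall_mem_zpowers hγ).trans hH)
  exact Units.ext (by simpa using (IsPrimitiveRoot.coe_units_iff.2 hroot).eq_neg_one_of_two_right)

lemma sum_range_weilSum {R : Type*} [CommRing R] (Ψ : AddChar L R) {N M : ℕ} (hN : N ≠ 0)
    (hM : M ∣ Nat.card Lˣ) (i : ℤ) :
    ∑ b ∈ Finset.range M, weilSum Ψ (N * M) ((γ ^ (i + N * b) : Lˣ) : L) =
      M * weilSum Ψ N ((γ ^ i : Lˣ) : L) := by
  have hNM : N * M ≠ 0 := mul_ne_zero hN (Nat.pos_of_dvd_of_pos hM Nat.card_pos).ne'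
  have hterm (b : ℕ) (v : Lˣ) : ((γ ^ (i + N * b) : Lˣ) : L) * (v : L) ^ (N * M) =
      (γ ^ i : Lˣ) * ((γ ^ b * v ^ M : Lˣ) : L) ^ N := by
    rw [zpow_add, ← Nat.cast_mul, zpow_natCast]
    push_cast
    ring
  have hsum := sum_range_sum_zpow_mul_pow hγ hM fun v => Ψ ((γ ^ i : Lˣ) * (v : L) ^ N)
  simp only [weilSum_eq_one_add_sum_units Ψ hNM, weilSum_eq_one_add_sum_units Ψ hN, hterm,
    Finset.sum_add_distrib, hsum, Finset.sum_const, Finset.card_range, nsmul_eq_mul, mul_one,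
    mul_add]

variable {p e : ℕ} [Fact p.Prime] [CharP L p]

lemma dvd_sub_kSemi_of_zpow_eq_neg_one (hL : Fintype.card L = (p ^ e) ^ (2 * k)) {B : ℤ}
    (hB : γ ^ (((p ^ e : ℕ) - 1 : ℤ) * B) = -1) :
    ((p ^ e + 1 : ℕ) : ℤ) ∣ B - kSemi p e k (p ^ e + 1) 1 := by
  have hp : p.Prime := Fact.out
  have hP := one_lt_of_card_eq_pow hL
  rcases eq_or_ne p 2 with rfl | hp2
  · have hone : (-1 : Lˣ) = 1 := Units.ext (by simpa using CharTwo.neg_eq (1 : L))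
    rw [hone, zpow_pred_mul_eq_one_iff hγ hL] at hB
    simpa [kSemi] using (dvd_mul_right _ _).trans hB
  · have hdvd := (kSemi_add_one_modEq (e := e) (k := k) hp hp2).dvd
    set G := ∑ j ∈ Finset.range k, ((p ^ e) ^ 2) ^ j with hG
    have heven : 2 ∣ p ^ e + 1 := (hp.odd_of_ne_two hp2).pow.add_one.two_dvd
    have hhalf : γ ^ ((p ^ e - 1) * ((p ^ e + 1) / 2 * G)) = -1 := by
      refine pow_half_card_eq_neg_one hγ ?_
      rw [card_units_of_card_eq_pow hL, ← hG]
      nth_rw 1 [← Nat.div_mul_cancel heven]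
      ring
    have hone : γ ^ (((p ^ e : ℕ) - 1 : ℤ) * (B - ((p ^ e + 1) / 2 * G : ℕ))) = 1 := by
      rw [mul_sub, zpow_sub, hB, ← Nat.cast_pred (by omega), ← Nat.cast_mul, zpow_natCast, hhalf,
        mul_inv_cancel]
    have hsub := (dvd_mul_right _ _).trans ((zpow_pred_mul_eq_one_iff hγ hL _).1 hone)
    simpa using dvd_add hsub hdvd

lemma eq_zero_of_add_pow_mul_pow_eq_zero (hL : Fintype.card L = (p ^ e) ^ (2 * k)) {i : ℤ}
    (hi : ¬((p ^ e + 1 : ℕ) : ℤ) ∣ i - kSemi p e k (p ^ e + 1) 1) {x : L}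
    (hx : ((γ ^ i : Lˣ) : L) * x + ((γ ^ i : Lˣ) : L) ^ p ^ e * x ^ (p ^ e * p ^ e) = 0) :
    x = 0 := by
  by_contra hx0
  obtain ⟨w, hw : γ ^ w = Units.mk0 x hx0⟩ := hγ (Units.mk0 x hx0)
  have hunits : (γ ^ i) ^ p ^ e * (γ ^ w) ^ (p ^ e * p ^ e) = -(γ ^ i * γ ^ w) :=
    Units.ext (by simpa [hw] using eq_neg_of_add_eq_zero_right hx)
  have hlog : γ ^ (((p ^ e : ℕ) - 1 : ℤ) * (i + ((p ^ e + 1 : ℕ) : ℤ) * w)) = -1 := by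
    calc γ ^ (((p ^ e : ℕ) - 1 : ℤ) * (i + ((p ^ e + 1 : ℕ) : ℤ) * w))
        = (γ ^ i) ^ p ^ e * (γ ^ w) ^ (p ^ e * p ^ e) * (γ ^ i * γ ^ w)⁻¹ := by
          simp only [← zpow_natCast, ← zpow_mul, ← zpow_add, ← zpow_neg]
          congr 1
          push_cast
          ring
      _ = -1 := by rw [hunits, neg_mul, mul_inv_cancel]
  have hdvd := dvd_sub_kSemi_of_zpow_eq_neg_one hγ hL hlog
  rw [add_sub_right_comm] at hdvd
  exact hi ((dvd_add_left (dvd_mul_right _ _)).1 hdvd)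

variable {Ψ : AddChar L ℂ} (hΨ : Ψ.IsPrimitive) (hfrob : ∀ z, Ψ (z ^ p) = Ψ z)
include hΨ hfrob

lemma weilSum_eq_of_not_dvd (hL : Fintype.card L = (p ^ e) ^ (2 * k)) {i : ℤ}
    (hi : ¬((p ^ e + 1 : ℕ) : ℤ) ∣ i - kSemi p e k (p ^ e + 1) 1) :
    weilSum Ψ (p ^ e + 1) ((γ ^ i : Lˣ) : L) = (-(p ^ e : ℕ) : ℂ) ^ k := by
  have hint : IsIntegral ℤ (∑ v with v ∈ cyclotomicClass γ (p ^ e + 1) i, Ψ (v : L)) :=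
    IsIntegral.sum _ fun v _ => IsIntegral.of_pow (Fact.out : p.Prime).pos (by
      rw [← AddChar.map_nsmul_eq_pow, nsmul_eq_mul, CharP.cast_eq_zero, zero_mul,
        AddChar.map_zero_eq_one]
      exact isIntegral_one)
  refine eq_neg_pow_of_sq_eq_of_integral (one_lt_of_card_eq_pow hL) hint ?_ ?_
  · rw [weilSum_eq_one_add_sum_units Ψ (Nat.succ_ne_zero _)]
    have h := sum_zpow_mul_pow hγ (add_one_dvd_card_units hL) i fun v => Ψ (v : L)
    simpa using h
  · obtain ⟨y, hy⟩ := exists_pow_eq_neg_one hγ hL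
    have hneg : weilSum Ψ (p ^ e + 1) (-((γ ^ i : Lˣ) : L)) =
        weilSum Ψ (p ^ e + 1) (γ ^ i : Lˣ) := by
      rw [← weilSum_mul_pow Ψ _ _ y, ← Units.val_pow_eq_pow_val, hy, Units.val_neg, Units.val_one,
        neg_mul_neg, mul_one]
    have hsq := weilSum_mul_weilSum_neg hΨ hfrob fun x =>
      eq_zero_of_add_pow_mul_pow_eq_zero hγ hL hi
    rwa [hneg, hL, Nat.cast_pow] at hsq

lemma weilSum_add_one_eq (hL : Fintype.card L = (p ^ e) ^ (2 * k)) (i : ℤ) :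
    weilSum Ψ (p ^ e + 1) ((γ ^ i : Lˣ) : L) = (-(p ^ e : ℕ) : ℂ) ^ k -
      if ((p ^ e + 1 : ℕ) : ℤ) ∣ i - kSemi p e k (p ^ e + 1) 1
      then (p ^ e + 1 : ℕ) * (-(p ^ e : ℕ) : ℂ) ^ k else 0 := by
  split_ifs with hi
  · have hother : ∀ b ∈ Finset.range (p ^ e),
        weilSum Ψ (p ^ e + 1) ((γ ^ (i + (b + 1 : ℕ)) : Lˣ) : L) = (-(p ^ e : ℕ) : ℂ) ^ k := by
      refine fun b hb => weilSum_eq_of_not_dvd hγ hΨ hfrob hL fun h => ?_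
      rw [add_sub_right_comm, dvd_add_right hi, Int.natCast_dvd_natCast] at h
      exact (Nat.le_of_dvd b.succ_pos h).not_gt (Nat.succ_lt_succ (Finset.mem_range.1 hb))
    have hsum := sum_range_weilSum hγ Ψ one_ne_zero (add_one_dvd_card_units hL) i
    simp only [one_mul, Nat.cast_one, weilSum_one_eq_zero hΨ (Units.ne_zero _), mul_zero] at hsum
    rw [Finset.sum_range_succ', Finset.sum_congr rfl hother, Finset.sum_const, Finset.card_range,
      nsmul_eq_mul, Nat.cast_zero, add_zero] at hsum
    push_cast at hsum ⊢
    linear_combination hsum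
  · rw [weilSum_eq_of_not_dvd hγ hΨ hfrob hL hi, sub_zero]

theorem weilSum_eq_of_dvd (hL : Fintype.card L = (p ^ e) ^ (2 * k)) {N : ℕ} (hN : N ∣ p ^ e + 1)
    (i : ℤ) :
    weilSum Ψ N ((γ ^ i : Lˣ) : L) = (-(p ^ e : ℕ) : ℂ) ^ k -
      if (N : ℤ) ∣ i - kSemi p e k N 1 then N * (-(p ^ e : ℕ) : ℂ) ^ k else 0 := by
  have hκ : (N : ℤ) ∣ i - kSemi p e k (p ^ e + 1) 1 ↔ (N : ℤ) ∣ i - kSemi p e k N 1 := by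
    have h := (Int.natCast_modEq_iff.2
      (kSemi_modEq_of_dvd (n := k) (τ := 1) (Fact.out : p.Prime) dvd_rfl hN)).dvd
    rw [← sub_sub_sub_cancel_left _ _ i] at h
    exact dvd_iff_dvd_of_dvd_sub h
  obtain ⟨M, hM⟩ := hN
  have hN0 : 0 < N := Nat.pos_of_mul_pos_right (hM ▸ (p ^ e).add_one_pos)
  have hM0 : 0 < M := Nat.pos_of_mul_pos_left (hM ▸ (p ^ e).add_one_pos)
  have hMcard : M ∣ Nat.card Lˣ := (Dvd.intro_left N hM.symm).trans (add_one_dvd_card_units hL)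
  have hsum := sum_range_weilSum hγ Ψ hN0.ne' hMcard i
  rw [← hM, Finset.sum_congr rfl fun b _ => weilSum_add_one_eq hγ hΨ hfrob hL _,
    Finset.sum_sub_distrib, Finset.sum_const, Finset.card_range, nsmul_eq_mul] at hsum
  have hite := sum_range_ite_dvd hN0 hM0 (i - kSemi p e k (p ^ e + 1) 1)
    ((p ^ e + 1 : ℕ) * (-(p ^ e : ℕ) : ℂ) ^ k)
  simp only [← hM, hκ, ← add_sub_right_comm] at hite
  rw [hite] at hsum
  refine mul_left_cancel₀ (Nat.cast_ne_zero.2 hM0.ne') (hsum.symm.trans ?_)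
  rw [mul_sub, mul_ite, mul_zero, hM]
  congr! 2
  push_cast
  ring

end Semiprimitive

section CanonicalCharacter

/-- The canonical additive character `x ↦ exp (2πi Tr(x) / p)` of a finite field `L` of
characteristic `p`, where `Tr` is the absolute trace. -/
def canonicalAddChar (p : ℕ) [Fact p.Prime] (L : Type*) [Field L] [CharP L p] : AddChar L ℂ :=
  letI := ZMod.algebra L p
  (ZMod.stdAddChar (N := p)).compAddMonoidHom (Algebra.trace (ZMod p) L).toAddMonoidHom

variable {p : ℕ} [Fact p.Prime] {L : Type*} [Field L] [Finite L] [CharP L p]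

lemma canonicalAddChar_isPrimitive : (canonicalAddChar p L).IsPrimitive := by
  let := ZMod.algebra L p
  have : Module.Finite (ZMod p) L := Module.Finite.of_finite
  have : Algebra.IsSeparable (ZMod p) L := Algebra.IsAlgebraic.isSeparable_of_perfectField
  refine AddChar.IsPrimitive.of_ne_one fun h => one_ne_zero (α := ZMod p) ?_
  obtain ⟨x, hx⟩ := Algebra.trace_surjective (ZMod p) L 1
  refine ZMod.injective_stdAddChar ?_
  rw [← hx, AddChar.map_zero_eq_one]
  exact DFunLike.congr_fun h x

lemma canonicalAddChar_pow_char (z : L) :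
    canonicalAddChar p L (z ^ p) = canonicalAddChar p L z := by
  let := ZMod.algebra L p
  have : Module.Finite (ZMod p) L := Module.Finite.of_finite
  have : Fintype L := Fintype.ofFinite L
  have htr := Algebra.trace_eq_of_algEquiv (FiniteField.frobeniusAlgEquivOfAlgebraic (ZMod p) L) z
  rw [FiniteField.coe_frobeniusAlgEquivOfAlgebraic, ZMod.card] at htr
  exact congrArg ZMod.stdAddChar htr

lemma canonicalAddChar_trace {F : Type*} [Field F] [Finite F] [CharP F p] [Algebra F L] (x : L) :
    canonicalAddChar p F (Algebra.trace F L x) = canonicalAddChar p L x := by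
  let := ZMod.algebra F p
  let := ZMod.algebra L p
  have : IsScalarTower (ZMod p) F L := IsScalarTower.of_algebraMap_eq' (Subsingleton.elim _ _)
  exact congrArg ZMod.stdAddChar (Algebra.trace_trace (R := ZMod p) (S := F) x)

end CanonicalCharacter

section MapCyclotomicClass

variable {G H : Type*} [CommGroup G] [CommGroup H] {γ : G} (hγ : ∀ v : G, v ∈ Subgroup.zpowers γ)
  {g : H} (hg : ∀ v : H, v ∈ Subgroup.zpowers g)

include hg in
lemma exists_eq_pow_add_mul_iff [Finite H] (s h : ℕ) (v : H) :
    (∃ k : ℕ, v = g ^ (h + s * k)) ↔ v ∈ cyclotomicClass g s h := by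
  constructor
  · rintro ⟨k, rfl⟩
    exact ⟨g ^ k, by simp only [zpow_natCast, pow_add, ← pow_mul, mul_comm s]⟩
  · rintro ⟨z, rfl⟩
    obtain ⟨k, hk : g ^ k = z⟩ := mem_powers_iff_mem_zpowers.2 (hg z)
    exact ⟨k, by simp only [zpow_natCast, pow_add, ← hk, ← pow_mul, mul_comm s]⟩

include hγ hg

variable {f : G →* H} {A S : ℕ} (hf : f γ = g ^ A) (hSH : S ∣ Nat.card H) {D : ℤ}
include hf hSH

lemma gcd_dvd_of_map_mem_cyclotomicClass {y : G} (hy : f y ∈ cyclotomicClass g S D) :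
    (A.gcd S : ℤ) ∣ D := by
  obtain ⟨w, rfl⟩ := hγ y
  simp only [map_zpow, hf, ← zpow_natCast g, ← zpow_mul, zpow_mem_cyclotomicClass_iff hg hSH] at hy
  exact (exists_mul_modEq_iff_gcd_dvd A S D).1 ⟨w, (Int.modEq_iff_dvd.2 hy).symm⟩

lemma map_mem_cyclotomicClass_iff [Finite H] (hSG : S / A.gcd S ∣ Nat.card G) {j : ℤ}
    (hj : A * j ≡ D [ZMOD S]) (y : G) :
    f y ∈ cyclotomicClass g S D ↔ y ∈ cyclotomicClass γ (S / A.gcd S) j := by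
  obtain ⟨w, rfl⟩ := hγ y
  simp only [map_zpow, hf, ← zpow_natCast g, ← zpow_mul, zpow_mem_cyclotomicClass_iff hg hSH,
    zpow_mem_cyclotomicClass_iff hγ hSG]
  exact dvd_mul_sub_iff_of_modEq (Nat.pos_of_dvd_of_pos hSH Nat.card_pos) hj w

end MapCyclotomicClass

/-- The number of elements of trace `b` in the cyclotomic class `γ^i · ⟨γ^N⟩` of the finite
field `E`. -/
def traceClassCard {F E : Type*} [Field F] [Field E] [Fintype E] [Algebra F E] (γ : Eˣ) (N : ℕ)
    (i : ℤ) (b : F) : ℕ :=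
  (Finset.univ.filter fun y : Eˣ =>
    y ∈ cyclotomicClass γ N i ∧ Algebra.trace F E (y : E) = b).card

section Subfield

lemma card_units_dvd_card_units (F E : Type*) [Field F] [Field E] [Finite E] [Algebra F E] :
    Nat.card Fˣ ∣ Nat.card Eˣ :=
  Subgroup.card_dvd_of_injective (Units.map (algebraMap F E : F →* E))
    (Units.map_injective (algebraMap F E).injective)

lemma mem_range_algebraMap_of_pow_card_eq {E K : Type*} [Field E] [Finite E] [Field K]
    [Algebra E K] {x : K} (hx : x ^ Nat.card E = x) : x ∈ Set.range (algebraMap E K) :=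
  (splits_X_pow_nat_card_sub_X (K := E)).mem_range_of_isRoot
    (FiniteField.X_pow_card_sub_X_ne_zero E Finite.one_lt_card) (by simp [hx])

variable {F E K : Type*} [Field F] [Field E] [Field K] [Algebra F E] [Algebra E K] [Algebra F K]
  [IsScalarTower F E K] [FiniteDimensional F E] [FiniteDimensional E K]

lemma trace_algebraMap_eq_finrank_mul (y : E) :
    Algebra.trace F K (algebraMap E K y) = Module.finrank E K * Algebra.trace F E y := by
  rw [← Algebra.trace_trace (S := E), Algebra.trace_algebraMap, map_nsmul, nsmul_eq_mul]

lemma norm_algebraMap_eq_pow_finrank (y : E) :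
    Algebra.norm F (algebraMap E K y) = Algebra.norm F y ^ Module.finrank E K := by
  rw [← Algebra.norm_norm (R := F) (S := E), Algebra.norm_algebraMap, map_pow]

end Subfield

theorem NN_eq_traceClassCard {F E K : Type*} [Field F] [Fintype F] [Field E] [Fintype E] [Field K]
    [Fintype K] [Algebra F E] [Algebra E K] [Algebra F K] [IsScalarTower F E K] {t : ℕ}
    (hE : Fintype.card E = Fintype.card F ^ t)
    {g : Fˣ} (hg : ∀ v : Fˣ, v ∈ Subgroup.zpowers g)
    {γ : Eˣ} (hγ : ∀ v : Eˣ, v ∈ Subgroup.zpowers γ) (hγg : Algebra.norm F (γ : E) = g)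
    {s h : ℕ} {i : ℤ} (hs : s ∣ Nat.card Fˣ)
    (hi : Module.finrank E K * i ≡ h [ZMOD s]) (hK : (Module.finrank E K : F) ≠ 0) (a : F) :
    NN F K (g : F) s h t a =
      traceClassCard γ (s / (Module.finrank E K).gcd s) i ((Module.finrank E K : F)⁻¹ * a) := by
  have : Module.Finite F K := Module.Finite.of_finite
  have hnorm (y : Eˣ) : (∃ k : ℕ, Algebra.norm F (algebraMap E K y) = (g : F) ^ (h + s * k)) ↔
      y ∈ cyclotomicClass γ (s / (Module.finrank E K).gcd s) i := by
    let f : Eˣ →* Fˣ := (powMonoidHom (Module.finrank E K)).comp (Units.map (Algebra.norm F))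
    have hf : f γ = g ^ Module.finrank E K := Units.ext (by simp [f, hγg])
    rw [← map_mem_cyclotomicClass_iff hγ hg hf hs
      ((Nat.div_dvd_of_dvd (Nat.gcd_dvd_right _ s)).trans
        (hs.trans (card_units_dvd_card_units F E)))
      hi, ← exists_eq_pow_add_mul_iff hg]
    simp [f, Units.ext_iff, norm_algebraMap_eq_pow_finrank]
  have htrace (y : E) : Algebra.trace F K (algebraMap E K y) = a ↔
      Algebra.trace F E y = (Module.finrank E K : F)⁻¹ * a := by
    rw [trace_algebraMap_eq_finrank_mul, eq_inv_mul_iff_mul_eq₀ hK]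
  rw [traceClassCard, ← Fintype.card_subtype, ← Nat.card_eq_fintype_card, NN]
  symm
  refine Nat.card_congr (Equiv.ofBijective (fun y => ⟨algebraMap E K (y.1 : E), ?_,
    (htrace _).2 y.2.2, (hnorm _).2 y.2.1⟩) ⟨fun y z hyz => ?_, ?_⟩)
  · rw [← hE, ← map_pow, FiniteField.pow_card]
  · exact Subtype.ext (Units.ext ((algebraMap E K).injective (congrArg Subtype.val hyz)))
  · rintro ⟨x, hxE, hxtr, k, hk⟩
    rw [← hE, ← Nat.card_eq_fintype_card] at hxE
    obtain ⟨y, rfl⟩ := mem_range_algebraMap_of_pow_card_eq hxE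
    have hy : y ≠ 0 := by
      rintro rfl
      rw [map_zero, Algebra.norm_zero] at hk
      exact pow_ne_zero _ g.ne_zero hk.symm
    exact ⟨⟨Units.mk0 y hy, (hnorm (Units.mk0 y hy)).1 ⟨k, hk⟩, (htrace y).1 hxtr⟩, rfl⟩

section Counting

lemma card_mul_card_filter_eq {ι F R : Type*} [Field F] [Fintype F] [CommRing R] [IsDomain R]
    {ψ : AddChar F R} (hψ : ψ.IsPrimitive) (A : Finset ι) (f : ι → F) (b : F) :
    (Fintype.card F : R) * (A.filter fun y => f y = b).card =
      ∑ c, ψ (-(c * b)) * ∑ y ∈ A, ψ (c * f y) := by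
  have horth (y : ι) : ∑ c, ψ (-(c * b)) * ψ (c * f y) =
      ((if f y = b then Fintype.card F else 0 : ℕ) : R) := by
    simpa only [← AddChar.map_add_eq_mul, mul_sub, neg_add_eq_sub, sub_eq_zero] using
      AddChar.sum_mulShift (f y - b) hψ
  simp only [Finset.mul_sum, Finset.sum_comm (s := Finset.univ) (t := A), horth, ← Nat.cast_sum,
    ← Finset.sum_filter, Finset.sum_const, smul_eq_mul]
  rw [← Nat.cast_mul, mul_comm]

variable {p : ℕ} [Fact p.Prime] {F E : Type*} [Field F] [Fintype F] [CharP F p] [Field E]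
  [Fintype E] [CharP E p] [Algebra F E] {γ : Eˣ} (hγ : ∀ v : Eˣ, v ∈ Subgroup.zpowers γ)
include hγ

lemma mul_sum_cyclotomicClass_eq_weilSum_sub_one (Ψ : AddChar E ℂ) {N : ℕ}
    (hN : N ∣ Nat.card Eˣ) (i : ℤ) (c : E) :
    (N : ℂ) * ∑ y : Eˣ with y ∈ cyclotomicClass γ N i, Ψ (c * y) =
      weilSum Ψ N (c * (γ ^ i : Eˣ)) - 1 := by
  rw [weilSum_eq_one_add_sum_units Ψ (Nat.pos_of_dvd_of_pos hN Nat.card_pos).ne',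
    add_sub_cancel_left, ← nsmul_eq_mul, ← sum_zpow_mul_pow hγ hN i fun v => Ψ (c * (v : E))]
  simp only [Units.val_mul, Units.val_pow_eq_pow_val, mul_assoc]

variable (p) in
lemma card_mul_traceClassCard_eq_sum {N : ℕ} (hN : N ∣ Nat.card Eˣ) (i : ℤ) (b : F) :
    (Fintype.card F : ℂ) * (N * traceClassCard γ N i b) =
      ∑ c : F, canonicalAddChar p F (-(c * b)) *
        (weilSum (canonicalAddChar p E) N (algebraMap F E c * (γ ^ i : Eˣ)) - 1) := by
  have hcount := card_mul_card_filter_eq (canonicalAddChar_isPrimitive (p := p))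
    (Finset.univ.filter fun y : Eˣ => y ∈ cyclotomicClass γ N i)
    (fun y => Algebra.trace F E (y : E)) b
  have htrace (c : F) (y : E) : canonicalAddChar p F (c * Algebra.trace F E y) =
      canonicalAddChar p E (algebraMap F E c * y) := by
    rw [← canonicalAddChar_trace (F := F) (_ * y), ← Algebra.smul_def, (Algebra.trace F E).map_smul,
      smul_eq_mul]
  simp only [Finset.filter_filter, htrace] at hcount
  rw [mul_left_comm, traceClassCard, hcount, Finset.mul_sum]
  refine Finset.sum_congr rfl fun c _ => ?_
  rw [← mul_sum_cyclotomicClass_eq_weilSum_sub_one hγ _ hN, mul_left_comm]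

lemma card_mul_traceClassCard_eq {e n t : ℕ} (hF : Fintype.card F = (p ^ e) ^ (2 * n))
    (hE : Fintype.card E = Fintype.card F ^ t) {N : ℕ} (hN : N ∣ p ^ e + 1) (i : ℤ) (b : F) :
    (Fintype.card F : ℂ) * (N * traceClassCard γ N i b) = Fintype.card E - 1 +
      ∑ c : Fˣ, canonicalAddChar p F (-(c * b)) * ((-(p ^ e : ℕ) : ℂ) ^ (n * t) - 1 -
        if Units.map (algebraMap F E) c ∈ cyclotomicClass γ N (kSemi p e n N t - i)
        then N * (-(p ^ e : ℕ) : ℂ) ^ (n * t) else 0) := by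
  rw [hF, ← pow_mul, mul_assoc] at hE
  have hNE : N ∣ Nat.card Eˣ := hN.trans (add_one_dvd_card_units hE)
  rw [card_mul_traceClassCard_eq_sum p hγ hNE, sum_eq_zero_add_sum_units]
  congr 1
  · simp [weilSum]
  · refine Finset.sum_congr rfl fun c _ => ?_
    obtain ⟨w, hw : γ ^ w = Units.map (algebraMap F E) c⟩ := hγ (Units.map (algebraMap F E) c)
    have hc : algebraMap F E c * (γ ^ i : Eˣ) = (γ ^ (w + i) : Eˣ) := by
      rw [zpow_add, hw]
      rfl
    rw [hc, weilSum_eq_of_dvd hγ canonicalAddChar_isPrimitive canonicalAddChar_pow_char hE hN,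
      ← hw, ← kSemi_mul_right]
    simp only [zpow_mem_cyclotomicClass_iff hγ hNE, sub_sub_eq_add_sub, sub_right_comm _ _ (1 : ℂ)]

end Counting

section SubfieldUnits

lemma gcd_pow_card_sub_one_div_eq {F : Type*} [Field F] [Fintype F] {N : ℕ} (hN : N ∣ Nat.card Fˣ)
    (t : ℕ) : ((Fintype.card F ^ t - 1) / (Fintype.card F - 1)).gcd N = t.gcd N := by
  have hq : 1 < Fintype.card F := Fintype.one_lt_card
  rw [Nat.card_eq_fintype_card, Fintype.card_units] at hN
  rw [← Nat.geomSum_eq hq]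
  exact (geomSum_modEq ((Nat.modEq_iff_dvd' hq.le).2 hN).symm t).gcd_eq

variable {F E : Type*} [Field F] [Fintype F] [Field E] [Fintype E] [Algebra F E] {t : ℕ}
  (hE : Fintype.card E = Fintype.card F ^ t) {g : Fˣ} {γ : Eˣ}
  (hγg : Algebra.norm F (γ : E) = g)
include hE hγg

lemma unitsMap_algebraMap_eq_pow :
    Units.map (algebraMap F E) g = γ ^ ((Fintype.card F ^ t - 1) / (Fintype.card F - 1)) := by
  refine Units.ext ?_
  rw [← hE, ← Nat.card_eq_fintype_card, ← Nat.card_eq_fintype_card, Units.val_pow_eq_pow_val,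
    ← FiniteField.algebraMap_norm_eq_pow, hγg]
  rfl

variable (hg : ∀ v : Fˣ, v ∈ Subgroup.zpowers g) (hγ : ∀ v : Eˣ, v ∈ Subgroup.zpowers γ)
  {N : ℕ} (hN : N ∣ Nat.card Fˣ) {D : ℤ}
include hg hγ hN

lemma unitsMap_not_mem_cyclotomicClass (hD : ¬(t.gcd N : ℤ) ∣ D) (c : Fˣ) :
    Units.map (algebraMap F E) c ∉ cyclotomicClass γ N D := by
  rw [← gcd_pow_card_sub_one_div_eq hN] at hD
  exact fun hc => hD (gcd_dvd_of_map_mem_cyclotomicClass hg hγ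
    (unitsMap_algebraMap_eq_pow hE hγg) (hN.trans (card_units_dvd_card_units F E)) hc)

lemma unitsMap_mem_cyclotomicClass_iff {j : ℤ}
    (hj : ((Fintype.card F ^ t - 1) / (Fintype.card F - 1) : ℕ) * j ≡ D [ZMOD N]) (c : Fˣ) :
    Units.map (algebraMap F E) c ∈ cyclotomicClass γ N D ↔
      c ∈ cyclotomicClass g (N / t.gcd N) j := by
  rw [← gcd_pow_card_sub_one_div_eq hN]
  exact map_mem_cyclotomicClass_iff hg hγ (unitsMap_algebraMap_eq_pow hE hγg)
    (hN.trans (card_units_dvd_card_units F E))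
    ((Nat.div_dvd_of_dvd (Nat.gcd_dvd_right _ N)).trans hN) hj c

lemma mul_card_unitsMap_mem_cyclotomicClass :
    N * (Finset.univ.filter fun c : Fˣ =>
        Units.map (algebraMap F E) c ∈ cyclotomicClass γ N D).card =
      if (t.gcd N : ℤ) ∣ D then t.gcd N * Nat.card Fˣ else 0 := by
  split_ifs with hD
  · rw [← gcd_pow_card_sub_one_div_eq hN] at hD
    obtain ⟨j, hj⟩ := (exists_mul_modEq_iff_gcd_dvd _ N D).2 hD
    have hcard := sum_zpow_mul_pow hg
      ((Nat.div_dvd_of_dvd (Nat.gcd_dvd_right t N)).trans hN) j fun _ => 1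
    simp only [Finset.sum_const, smul_eq_mul, mul_one, Finset.card_univ] at hcard
    simp only [unitsMap_mem_cyclotomicClass_iff hE hγg hg hγ hN hj]
    rw [Nat.card_eq_fintype_card, hcard, ← mul_assoc, Nat.mul_div_cancel' (Nat.gcd_dvd_right t N)]
  · rw [Finset.filter_false_of_mem fun c _ =>
      unitsMap_not_mem_cyclotomicClass hE hγg hg hγ hN hD c, Finset.card_empty, mul_zero]

end SubfieldUnits

section SemiprimitiveCount

lemma neg_natCast_pow_mul_eq_mul_sqrt {P q n : ℕ} (hP : 0 < P) (hq : q = P ^ (2 * n)) (t : ℕ) :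
    (-(P : ℝ)) ^ (n * t) = q * ((-1) ^ (n * t) * √((q : ℝ) ^ ((t : ℤ) - 2))) := by
  have hP' : (0 : ℝ) < P := Nat.cast_pos.2 hP
  have hsq : (q : ℝ) ^ ((t : ℤ) - 2) = ((P : ℝ) ^ (n * ((t : ℤ) - 2))) ^ 2 := by
    rw [hq, Nat.cast_pow, ← zpow_natCast, ← zpow_natCast, ← zpow_mul, ← zpow_mul]
    congr 1
    push_cast
    ring
  have hmul : (q : ℝ) * (P : ℝ) ^ (n * ((t : ℤ) - 2)) = (P : ℝ) ^ (n * t) := by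
    rw [hq, Nat.cast_pow, ← zpow_natCast, ← zpow_natCast, ← zpow_add₀ hP'.ne']
    congr 1
    push_cast
    ring
  rw [hsq, Real.sqrt_sq (zpow_nonneg hP'.le _), mul_left_comm, hmul, neg_pow]

lemma neg_natCast_pow_eq_mul_sqrt {P q n : ℕ} (hq : q = P ^ (2 * n)) :
    (-(P : ℝ)) ^ n = (-1) ^ n * √(q : ℝ) := by
  rw [hq, mul_comm 2, pow_mul, Nat.cast_pow, Real.sqrt_sq (by positivity), Nat.cast_pow, neg_pow]

variable {p e n t : ℕ} [Fact p.Prime] {F E : Type*} [Field F] [Fintype F] [CharP F p] [Field E]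
  [Fintype E] [CharP E p] [Algebra F E] (hF : Fintype.card F = (p ^ e) ^ (2 * n))
  (hE : Fintype.card E = Fintype.card F ^ t)
include hF hE

variable {γ : Eˣ} (hγ : ∀ v : Eˣ, v ∈ Subgroup.zpowers γ) {N : ℕ} (hN : N ∣ p ^ e + 1)
include hγ hN

lemma card_mul_traceClassCard_neg_inv_eq {c₀ : Fˣ} {w : ℤ}
    (hw : γ ^ w = Units.map (algebraMap F E) c₀) (i : ℤ) :
    (Fintype.card F : ℂ) * (N * traceClassCard γ N i (-(c₀⁻¹ : Fˣ) : F)) =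
      Fintype.card E - (-(p ^ e : ℕ) : ℂ) ^ (n * t) *
        (1 + N * ∑ c : Fˣ with
          Units.map (algebraMap F E) c ∈ cyclotomicClass γ N (kSemi p e n N t - i - w),
          canonicalAddChar p F (c : F)) := by
  have hψ : ∑ c : Fˣ, canonicalAddChar p F (c : F) = -1 := by
    have h := weilSum_one_eq_zero (canonicalAddChar_isPrimitive (p := p)) (one_ne_zero (α := F))
    rw [weilSum_eq_one_add_sum_units _ one_ne_zero] at h
    simpa [eq_neg_iff_add_eq_zero, add_comm] using h
  have hshift (c : Fˣ) : Units.map (algebraMap F E) (c * c₀) ∈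
      cyclotomicClass γ N (kSemi p e n N t - i) ↔
      Units.map (algebraMap F E) c ∈ cyclotomicClass γ N (kSemi p e n N t - i - w) := by
    rw [← mul_zpow_mem_cyclotomicClass_iff (i := _ - i), hw, ← map_mul]
  rw [card_mul_traceClassCard_eq hγ hF hE hN, ← Equiv.sum_comp (Equiv.mulRight c₀)]
  simp only [Equiv.coe_mulRight, Units.val_mul, mul_neg, neg_neg, hshift,
    Units.mul_inv_cancel_right, mul_sub, mul_ite, mul_zero, Finset.sum_sub_distrib,
    ← Finset.sum_mul, hψ, ← Finset.sum_filter, mul_one]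
  ring

variable {g : Fˣ} (hg : ∀ v : Fˣ, v ∈ Subgroup.zpowers g) (hγg : Algebra.norm F (γ : E) = g)
include hg hγg

theorem mul_traceClassCard_zero (ht : 0 < t) (i : ℤ) :
    (N * traceClassCard γ N i (0 : F) : ℝ) = (Fintype.card F : ℝ) ^ (t - 1) - 1 +
      (Fintype.card F - 1) *
        (1 - if (t.gcd N : ℤ) ∣ kSemi p e n N t - i then (t.gcd N : ℝ) else 0) *
        ((-1) ^ (n * t) * √((Fintype.card F : ℝ) ^ ((t : ℤ) - 2))) := by
  have hQ : (Fintype.card E : ℝ) = Fintype.card F * (Fintype.card F : ℝ) ^ (t - 1) := by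
    rw [hE, Nat.cast_pow, mul_pow_sub_one ht.ne']
  have hunits : (Fintype.card Fˣ : ℝ) = Fintype.card F - 1 := by
    rw [Fintype.card_units, Nat.cast_pred Fintype.card_pos]
  have hclass := mul_card_unitsMap_mem_cyclotomicClass hE hγg hg hγ
    (hN.trans (add_one_dvd_card_units hF)) (D := kSemi p e n N t - i)
  have hcount := card_mul_traceClassCard_eq hγ hF hE hN i 0
  simp only [mul_zero, neg_zero, AddChar.map_zero_eq_one, one_mul, Finset.sum_sub_distrib,
    ← Finset.sum_filter, Finset.sum_const, nsmul_eq_mul, Finset.card_univ] at hcount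
  set M := (Finset.univ.filter fun c : Fˣ => Units.map (algebraMap F E) c ∈
    cyclotomicClass γ N (kSemi p e n N t - i)).card
  replace hcount : (Fintype.card F * (N * traceClassCard γ N i (0 : F)) : ℝ) =
      Fintype.card E - 1 + (Fintype.card Fˣ * (-(p ^ e : ℕ)) ^ (n * t) - Fintype.card Fˣ * 1 -
        M * (N * (-(p ^ e : ℕ)) ^ (n * t))) := by
    exact_mod_cast hcount
  replace hclass : (N * M : ℝ) =
      (if (t.gcd N : ℤ) ∣ kSemi p e n N t - i then (t.gcd N : ℝ) else 0) * Fintype.card Fˣ := by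
    rw [ite_mul, zero_mul, ← Nat.card_eq_fintype_card (α := Fˣ)]
    exact_mod_cast hclass
  rw [neg_natCast_pow_mul_eq_mul_sqrt (pow_pos (Fact.out : p.Prime).pos e) hF, hQ] at hcount
  set ρ := (-1 : ℝ) ^ (n * t) * √((Fintype.card F : ℝ) ^ ((t : ℤ) - 2))
  rw [hunits] at hclass hcount
  refine mul_left_cancel₀ (Nat.cast_ne_zero.2 Fintype.card_ne_zero) (hcount.trans ?_)
  linear_combination -(Fintype.card F * ρ) * hclass

theorem mul_traceClassCard_neg_inv_of_not_dvd (ht : 0 < t) {c₀ : Fˣ} {w : ℤ}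
    (hw : γ ^ w = Units.map (algebraMap F E) c₀) {i : ℤ}
    (hΔ : ¬ (t.gcd N : ℤ) ∣ kSemi p e n N t - i - w) :
    (N * traceClassCard γ N i (-(c₀⁻¹ : Fˣ) : F) : ℝ) = (Fintype.card F : ℝ) ^ (t - 1) -
      (-1) ^ (n * t) * √((Fintype.card F : ℝ) ^ ((t : ℤ) - 2)) := by
  have hQ : (Fintype.card E : ℝ) = Fintype.card F * (Fintype.card F : ℝ) ^ (t - 1) := by
    rw [hE, Nat.cast_pow, mul_pow_sub_one ht.ne']
  have hcount := card_mul_traceClassCard_neg_inv_eq hF hE hγ hN hw i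
  rw [Finset.filter_false_of_mem fun c _ => unitsMap_not_mem_cyclotomicClass hE hγg hg hγ
    (hN.trans (add_one_dvd_card_units hF)) hΔ c, Finset.sum_empty, mul_zero, add_zero, mul_one]
    at hcount
  replace hcount : (Fintype.card F * (N * traceClassCard γ N i (-(c₀⁻¹ : Fˣ) : F)) : ℝ) =
      Fintype.card E - (-(p ^ e : ℕ)) ^ (n * t) := by
    exact_mod_cast hcount
  rw [neg_natCast_pow_mul_eq_mul_sqrt (pow_pos (Fact.out : p.Prime).pos e) hF, hQ,
    ← mul_sub] at hcount
  exact mul_left_cancel₀ (Nat.cast_ne_zero.2 Fintype.card_ne_zero) hcount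

theorem mul_traceClassCard_neg_inv_of_modEq (ht : 0 < t) {c₀ : Fˣ} {w : ℤ}
    (hw : γ ^ w = Units.map (algebraMap F E) c₀) {i j : ℤ}
    (hj : ((Fintype.card F ^ t - 1) / (Fintype.card F - 1) : ℕ) * j ≡
      kSemi p e n N t - i - w [ZMOD N]) :
    (N * traceClassCard γ N i (-(c₀⁻¹ : Fˣ) : F) : ℝ) = (Fintype.card F : ℝ) ^ (t - 1) -
      (1 + t.gcd N * ((1 - if ((N / t.gcd N : ℕ) : ℤ) ∣ j - kSemi p e n (N / t.gcd N) 1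
        then ((N / t.gcd N : ℕ) : ℝ) else 0) * ((-1) ^ n * √(Fintype.card F : ℝ)) - 1)) *
      ((-1) ^ (n * t) * √((Fintype.card F : ℝ) ^ ((t : ℤ) - 2))) := by
  have hQ : (Fintype.card E : ℝ) = Fintype.card F * (Fintype.card F : ℝ) ^ (t - 1) := by
    rw [hE, Nat.cast_pow, mul_pow_sub_one ht.ne']
  have hNF := hN.trans (add_one_dvd_card_units hF)
  have hdvd := Nat.gcd_dvd_right t N
  have hmul : (N : ℂ) = t.gcd N * (N / t.gcd N : ℕ) := by
    exact_mod_cast (Nat.mul_div_cancel' hdvd).symm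
  have huN : N / t.gcd N ∣ N := Nat.div_dvd_of_dvd hdvd
  have hcount := card_mul_traceClassCard_neg_inv_eq hF hE hγ hN hw i
  have hsum := mul_sum_cyclotomicClass_eq_weilSum_sub_one hg (canonicalAddChar p F)
    (huN.trans hNF) j 1
  rw [one_mul, weilSum_eq_of_dvd hg canonicalAddChar_isPrimitive canonicalAddChar_pow_char hF
    (huN.trans hN) j] at hsum
  simp only [one_mul] at hsum
  simp only [unitsMap_mem_cyclotomicClass_iff hE hγg hg hγ hNF hj] at hcount
  set u := N / t.gcd N
  rw [hmul, mul_assoc (t.gcd N : ℂ) (u : ℂ) (∑ _ ∈ _, _), hsum, ← hmul] at hcount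
  replace hcount : (Fintype.card F * (N * traceClassCard γ N i (-(c₀⁻¹ : Fˣ) : F)) : ℝ) =
      Fintype.card E - (-(p ^ e : ℕ)) ^ (n * t) * (1 + t.gcd N * ((-(p ^ e : ℕ)) ^ n -
        (if (u : ℤ) ∣ j - kSemi p e n u 1 then u * (-(p ^ e : ℕ) : ℝ) ^ n else 0) - 1)) := by
    exact_mod_cast hcount
  rw [neg_natCast_pow_mul_eq_mul_sqrt (pow_pos (Fact.out : p.Prime).pos e) hF,
    neg_natCast_pow_eq_mul_sqrt hF, hQ] at hcount
  refine mul_left_cancel₀ (Nat.cast_ne_zero.2 Fintype.card_ne_zero) (hcount.trans ?_)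
  rw [sub_mul (1 : ℝ), ite_mul, zero_mul]
  ring

end SemiprimitiveCount

lemma modEq_kSemi_iff_dvd_sub {p e n S N τ : ℕ} (hp : p.Prime) (hS : S ∣ p ^ e + 1)
    (hN : N ∣ S) (i : ℤ) :
    i ≡ kSemi p e n N τ [ZMOD N] ↔ (N : ℤ) ∣ kSemi p e n S τ - i := by
  have hk := Int.natCast_modEq_iff.2 (kSemi_modEq_of_dvd (n := n) (τ := τ) hp hS hN)
  exact ⟨fun h => (h.trans hk.symm).dvd, fun h => (Int.modEq_iff_dvd.2 h).trans hk⟩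

lemma mul_modEq_of_div_mul_modEq_div {T S l : ℕ} {j D : ℤ} (hT : l ∣ T) (hS : l ∣ S)
    (hD : (l : ℤ) ∣ D) (h : (T / l : ℕ) * j ≡ D / l [ZMOD (S / l : ℕ)]) : T * j ≡ D [ZMOD S] := by
  obtain ⟨T, rfl⟩ := hT
  obtain ⟨S, rfl⟩ := hS
  obtain ⟨D, rfl⟩ := hD
  rcases Nat.eq_zero_or_pos l with rfl | hl
  · simp
  have hl' : (l : ℤ) ≠ 0 := by exact_mod_cast hl.ne'
  rw [Nat.mul_div_cancel_left _ hl, Nat.mul_div_cancel_left _ hl,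
    Int.mul_ediv_cancel_left _ hl'] at h
  simpa [mul_assoc] using h.mul_left' (c := l)

lemma finrank_eq_div_of_card_eq_pow {E K : Type*} [Field E] [Fintype E] [Field K] [Fintype K]
    [Algebra E K] {q t m : ℕ} (hq : 1 < q) (hE : Fintype.card E = q ^ t)
    (hK : Fintype.card K = q ^ m) (ht : 0 < t) : Module.finrank E K = m / t := by
  have h := Module.card_eq_pow_finrank (K := E) (V := K)
  rw [hK, hE, ← pow_mul] at h
  exact (Nat.div_eq_of_eq_mul_right ht (Nat.pow_right_injective hq h)).symm

lemma NN_eq_div_mul_traceClassCard {F E K : Type*} [Field F] [Fintype F] [Field E] [Fintype E]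
    [Field K] [Fintype K] [Algebra F E] [Algebra E K] [Algebra F K] [IsScalarTower F E K]
    {s t h i : ℕ} (hE : Fintype.card E = Fintype.card F ^ t)
    {g : Fˣ} (hg : ∀ v : Fˣ, v ∈ Subgroup.zpowers g) {γ : Eˣ}
    (hγ : ∀ v : Eˣ, v ∈ Subgroup.zpowers γ) (hγg : Algebra.norm F (γ : E) = g)
    (hs : s ∣ Nat.card Fˣ) (hK : (Module.finrank E K : F) ≠ 0)
    (hh : (Module.finrank E K).gcd s ∣ h)
    (hi : Module.finrank E K / (Module.finrank E K).gcd s * i ≡ h / (Module.finrank E K).gcd s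
      [MOD s / (Module.finrank E K).gcd s]) (a : F) :
    (NN F K (g : F) s h t a : ℝ) = ((Module.finrank E K).gcd s : ℝ) / s *
      ((s / (Module.finrank E K).gcd s : ℕ) * traceClassCard γ (s / (Module.finrank E K).gcd s) i
        ((Module.finrank E K : F)⁻¹ * a)) := by
  set d := (Module.finrank E K).gcd s
  have hi' : (Module.finrank E K : ℤ) * i ≡ h [ZMOD s] := by
    refine mul_modEq_of_div_mul_modEq_div (l := d) (Nat.gcd_dvd_left _ _) (Nat.gcd_dvd_right _ _)
      (Int.natCast_dvd_natCast.2 hh) ?_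
    exact_mod_cast Int.natCast_modEq_iff.2 hi
  have hs0 : (s : ℝ) ≠ 0 := Nat.cast_ne_zero.2 (ne_zero_of_dvd_ne_zero Nat.card_pos.ne' hs)
  have hds : (d : ℝ) * (s / d : ℕ) = s := by
    exact_mod_cast Nat.mul_div_cancel' (Nat.gcd_dvd_right _ _)
  rw [NN_eq_traceClassCard hE hg hγ hγg hs hi' hK, ← mul_assoc, div_mul_eq_mul_div, hds,
    div_self hs0, one_mul]

section SemiprimitiveNN

variable {p e n s h t d l i : ℕ} [Fact p.Prime] {F E K : Type*} [Field F] [Fintype F] [CharP F p]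
  [Field E] [Fintype E] [CharP E p] [Field K] [Fintype K] [Algebra F E] [Algebra E K] [Algebra F K]
  [IsScalarTower F E K] (hF : Fintype.card F = (p ^ e) ^ (2 * n))
  (hE : Fintype.card E = Fintype.card F ^ t) {g : Fˣ} (hg : ∀ v : Fˣ, v ∈ Subgroup.zpowers g)
  {γ : Eˣ} (hγ : ∀ v : Eˣ, v ∈ Subgroup.zpowers γ) (hγg : Algebra.norm F (γ : E) = g)
  (ht : 0 < t) (hs : s ∣ p ^ e + 1) (hK : (Module.finrank E K : F) ≠ 0)
  (hd : d = (Module.finrank E K).gcd s) (hl : l = t.gcd (s / d)) (hh : d ∣ h)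
  (hi : Module.finrank E K / d * i ≡ h / d [MOD s / d])
include hF hE hg hγ hγg ht hs hK hd hl hh hi

theorem NN_zero_eq :
    (NN F K (g : F) s h t 0 : ℝ) = (d : ℝ) / s * ((Fintype.card F : ℝ) ^ (t - 1) - 1 +
      (Fintype.card F - 1) * (1 - if (i : ℤ) ≡ kSemi p e n l t [ZMOD l] then (l : ℝ) else 0) *
        ((-1) ^ (n * t) * √((Fintype.card F : ℝ) ^ ((t : ℤ) - 2)))) := by
  subst hd hl
  have hS := (Nat.div_dvd_of_dvd (Nat.gcd_dvd_right (Module.finrank E K) s)).trans hs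
  rw [NN_eq_div_mul_traceClassCard hE hg hγ hγg (hs.trans (add_one_dvd_card_units hF)) hK hh hi,
    mul_zero, mul_traceClassCard_zero hF hE hγ hS hg hγg ht]
  simp only [modEq_kSemi_iff_dvd_sub Fact.out hS (Nat.gcd_dvd_right t _)]

variable {a : F} (ha : a ≠ 0) {w : ℕ}
  (hw : (γ : E) ^ w = algebraMap F E (-(Module.finrank E K : F) * a⁻¹))
include ha hw

theorem NN_eq_of_not_dvd (hΔ : ¬ (l : ℤ) ∣ kSemi p e n (s / d) t - i - w) :
    (NN F K (g : F) s h t a : ℝ) = (d : ℝ) / s * ((Fintype.card F : ℝ) ^ (t - 1) -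
      (-1) ^ (n * t) * √((Fintype.card F : ℝ) ^ ((t : ℤ) - 2))) := by
  subst hd hl
  have hS := (Nat.div_dvd_of_dvd (Nat.gcd_dvd_right (Module.finrank E K) s)).trans hs
  rw [← mul_traceClassCard_neg_inv_of_not_dvd hF hE hγ hS hg hγg ht
    (c₀ := Units.mk0 _ (mul_ne_zero (neg_ne_zero.2 hK) (inv_ne_zero ha))) (w := w)
    (Units.ext (by simpa using hw)) hΔ,
    NN_eq_div_mul_traceClassCard hE hg hγ hγg (hs.trans (add_one_dvd_card_units hF)) hK hh hi]
  simp [mul_comm a]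

theorem NN_eq_of_modEq {u : ℕ} (hu : u = s / (d * l))
    (hΔ : (l : ℤ) ∣ kSemi p e n (s / d) t - i - w) {j : ℤ}
    (hj : ((Fintype.card F ^ t - 1) / (Fintype.card F - 1) / l : ℕ) * j ≡
      (kSemi p e n (s / d) t - i - w) / l [ZMOD u]) :
    (NN F K (g : F) s h t a : ℝ) = (d : ℝ) / s * ((Fintype.card F : ℝ) ^ (t - 1) -
      (1 + l * ((1 - if j ≡ kSemi p e n u 1 [ZMOD u] then (u : ℝ) else 0) *
        ((-1) ^ n * √(Fintype.card F : ℝ)) - 1)) *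
      ((-1) ^ (n * t) * √((Fintype.card F : ℝ) ^ ((t : ℤ) - 2)))) := by
  rw [← Nat.div_div_eq_div_mul] at hu
  subst hd hl hu
  have hSs := Nat.div_dvd_of_dvd (Nat.gcd_dvd_right (Module.finrank E K) s)
  have hsF := hs.trans (add_one_dvd_card_units hF)
  replace hj := mul_modEq_of_div_mul_modEq_div (gcd_pow_card_sub_one_div_eq (hSs.trans hsF) t ▸
    Nat.gcd_dvd_left _ _) (Nat.gcd_dvd_right _ _) hΔ hj
  simp only [Int.modEq_comm (a := j), Int.modEq_iff_dvd]
  rw [← mul_traceClassCard_neg_inv_of_modEq hF hE hγ (hSs.trans hs) hg hγg ht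
    (c₀ := Units.mk0 _ (mul_ne_zero (neg_ne_zero.2 hK) (inv_ne_zero ha))) (w := w)
    (Units.ext (by simpa using hw)) hj,
    NN_eq_div_mul_traceClassCard hE hg hγ hγg hsF hK hh hi]
  simp [mul_comm a]

end SemiprimitiveNN

/-- The values of `N_t` in the semiprimitive case `s ∣ p^e + 1`, `r = 2en`. -/
theorem stmt18 (p r m s h t d l u t0 i0 e n : ℕ) [Fact p.Prime] (hr : 0 < r) (hm : 2 ≤ m)
    (ht : t ∣ m) (ht0 : 0 < t)
    (he : 0 < e) (hn : 0 < n) (hren : r = 2 * e * n)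
    (hs1 : 1 < s) (hsd : s ∣ p ^ e + 1)
    (F E K : Type*) [Field F] [Fintype F] [Field E] [Fintype E] [Field K] [Fintype K]
    [Algebra F E] [Algebra E K] [Algebra F K] [IsScalarTower F E K]
    (hF : Fintype.card F = p ^ r) (hE : Fintype.card E = Fintype.card F ^ t)
    (hK : Fintype.card K = Fintype.card F ^ m)
    (g : Fˣ) (hg : ∀ u' : Fˣ, u' ∈ Subgroup.zpowers g)
    (γ : Eˣ) (hγ : ∀ u' : Eˣ, u' ∈ Subgroup.zpowers γ)
    (hγg : Algebra.norm F ((γ : Eˣ) : E) = (g : F))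
    (hsq : s ∣ Fintype.card F - 1) (hh : h < s)
    (hd : d = Nat.gcd (m / t) s) (hl : l = Nat.gcd t (s / d))
    (hu : u = s / (d * l)) (hT0 : t0 = (Fintype.card F ^ t - 1) / (Fintype.card F - 1))
    (hpmt : ¬ p ∣ m / t) (hdh : d ∣ h)
    (hi0 : i0 < s / d ∧ (m / (d * t)) * i0 ≡ h / d [MOD s / d])
    (a : F) (a0 : F) (ha0 : a0 = -(((m / t : ℕ) : F)) * a⁻¹)
    (ia0 : ℕ) (hia0 : a ≠ 0 → ((γ : Eˣ) : E) ^ ia0 = algebraMap F E a0)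
    (Δ : ℤ) (hΔ : Δ = (kSemi p e n (s / d) t : ℤ) - (i0 : ℤ) - (ia0 : ℤ))
    (j0 : ℕ)
    (hj0 : a ≠ 0 → (l : ℤ) ∣ Δ →
      j0 < u ∧ ((t0 / l : ℕ) : ℤ) * (j0 : ℤ) ≡ Δ / (l : ℤ) [ZMOD (u : ℤ)]) :
    (a = 0 → 1 < l → ¬ ((i0 : ℤ) ≡ (kSemi p e n l t : ℤ) [ZMOD (l : ℤ)]) →
      (NN F K (g : F) s h t a : ℝ) =
        ((d : ℝ) / (s : ℝ)) * ((Fintype.card F : ℝ) ^ (t - 1) - 1 +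
          (-1 : ℝ) ^ (n * t) * ((Fintype.card F : ℝ) - 1) *
            Real.sqrt ((Fintype.card F : ℝ) ^ ((t : ℤ) - 2)))) ∧
    (a = 0 → (l = 1 ∨ (1 < l ∧ (i0 : ℤ) ≡ (kSemi p e n l t : ℤ) [ZMOD (l : ℤ)])) →
      (NN F K (g : F) s h t a : ℝ) =
        ((d : ℝ) / (s : ℝ)) * ((Fintype.card F : ℝ) ^ (t - 1) - 1 -
          (-1 : ℝ) ^ (n * t) * ((Fintype.card F : ℝ) - 1) * ((l : ℝ) - 1) *
            Real.sqrt ((Fintype.card F : ℝ) ^ ((t : ℤ) - 2)))) ∧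
    (a ≠ 0 → ¬ ((l : ℤ) ∣ Δ) →
      (NN F K (g : F) s h t a : ℝ) =
        ((d : ℝ) / (s : ℝ)) * ((Fintype.card F : ℝ) ^ (t - 1) -
          (-1 : ℝ) ^ (n * t) * Real.sqrt ((Fintype.card F : ℝ) ^ ((t : ℤ) - 2)))) ∧
    (a ≠ 0 → (l : ℤ) ∣ Δ → 1 < u → ¬ ((j0 : ℤ) ≡ (kSemi p e n u 1 : ℤ) [ZMOD (u : ℤ)]) →
      (NN F K (g : F) s h t a : ℝ) =
        ((d : ℝ) / (s : ℝ)) * ((Fintype.card F : ℝ) ^ (t - 1) -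
          (-1 : ℝ) ^ (n * t) *
            (((-1 : ℝ) ^ n * Real.sqrt (Fintype.card F : ℝ) - 1) * (l : ℝ) + 1) *
            Real.sqrt ((Fintype.card F : ℝ) ^ ((t : ℤ) - 2)))) ∧
    (a ≠ 0 → (l : ℤ) ∣ Δ → (u = 1 ∨ (j0 : ℤ) ≡ (kSemi p e n u 1 : ℤ) [ZMOD (u : ℤ)]) →
      (NN F K (g : F) s h t a : ℝ) =
        ((d : ℝ) / (s : ℝ)) * ((Fintype.card F : ℝ) ^ (t - 1) -
          (-1 : ℝ) ^ (n * t) *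
            (((-1 : ℝ) ^ (n - 1) * ((u : ℝ) - 1) * Real.sqrt (Fintype.card F : ℝ) - 1) *
              (l : ℝ) + 1) *
            Real.sqrt ((Fintype.card F : ℝ) ^ ((t : ℤ) - 2)))) := by
  have : CharP F p := charP_of_card_eq_prime_pow hF
  have : CharP E p := charP_of_injective_algebraMap (algebraMap F E).injective p
  have hF' : Fintype.card F = (p ^ e) ^ (2 * n) := by
    rw [hF, hren, ← pow_mul, mul_comm 2, mul_assoc]
  have hmt : Module.finrank E K = m / t :=
    finrank_eq_div_of_card_eq_pow Fintype.one_lt_card hE hK ht0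
  have hi : m / t / d * i0 ≡ h / d [MOD s / d] := by
    rw [Nat.div_div_eq_div_mul, mul_comm t]
    exact hi0.2
  rw [← hmt] at hd hpmt hi ha0
  have hk : (Module.finrank E K : F) ≠ 0 := mt (CharP.cast_eq_zero_iff F p _).1 hpmt
  subst hΔ hT0 ha0
  refine ⟨fun ha _ hne => ?_, fun ha heq => ?_, fun ha hndvd => ?_, fun ha hdvd _ hne => ?_,
    fun ha hdvd heq => ?_⟩
  · rw [ha, NN_zero_eq hF' hE hg hγ hγg ht0 hsd hk hd hl hdh hi, if_neg hne]
    ring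
  · have hmod := heq.elim (by rintro rfl; exact Int.modEq_one) And.right
    rw [ha, NN_zero_eq hF' hE hg hγ hγg ht0 hsd hk hd hl hdh hi, if_pos hmod]
    ring
  · exact NN_eq_of_not_dvd hF' hE hg hγ hγg ht0 hsd hk hd hl hdh hi ha (hia0 ha) hndvd
  · rw [NN_eq_of_modEq hF' hE hg hγ hγg ht0 hsd hk hd hl hdh hi ha (hia0 ha) hu hdvd
      (hj0 ha hdvd).2, if_neg hne]
    ring
  · have hmod := heq.elim (by rintro rfl; exact Int.modEq_one) id
    obtain ⟨n, rfl⟩ := Nat.exists_eq_add_one.2 hn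
    rw [NN_eq_of_modEq hF' hE hg hγ hγg ht0 hsd hk hd hl hdh hi ha (hia0 ha) hu hdvd
      (hj0 ha hdvd).2, if_pos hmod, Nat.add_sub_cancel, pow_succ (-1 : ℝ) n]
    ring

end
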